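/- For every real number ε with 0 < ε < 1 there exists N such that for all natural numbers n ≥ N, the polynomial p_n has a real root in the open interval (3−ε, 3). -/

import Mathlib

/-!
The polynomial is affine in its parameter: `p_x(t) = f(t) + x g(t)` with
`f(t) = t⁴ - 4t³ + 3t² - 2t + 1` and `g(t) = t(t - 1)(3 - t)`. Since `g(3) = 0`, the value
`p_x(3) = f(3) = -5` does not depend on `x`, while at any fixed point of `(1, 3)` we have `g > 0`,
so `p_x` is eventually positive there. The intermediate value theorem gives a root in between.
-/

open Filter Set

theorem eventually_exists_mem_Ioo_add_mul_eq_zero {α 𝕜 : Type*}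
    [ConditionallyCompleteLinearOrder α] [DenselyOrdered α] [TopologicalSpace α] [OrderTopology α]
    [Field 𝕜] [LinearOrder 𝕜] [IsStrictOrderedRing 𝕜] [TopologicalSpace 𝕜] [OrderTopology 𝕜]
    {f g : α → 𝕜} {a b : α} (hab : a ≤ b) (hf : ContinuousOn f (Icc a b))
    (hg : ContinuousOn g (Icc a b)) (hga : 0 < g a) (hgb : g b ≤ 0) (hfb : f b < 0) :
    ∀ᶠ x in atTop, ∃ t ∈ Ioo a b, f t + x * g t = 0 := by
  have left_tendsto : Tendsto (fun x ↦ f a + x * g a) atTop atTop :=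
    tendsto_atTop_add_const_left _ _ (tendsto_id.atTop_mul_const hga)
  filter_upwards [left_tendsto.eventually_gt_atTop 0, eventually_ge_atTop 0] with x left_pos hx
  have right_neg : f b + x * g b < 0 :=
    add_neg_of_neg_of_nonpos hfb (mul_nonpos_of_nonneg_of_nonpos hx hgb)
  exact intermediate_value_Ioo' hab (hf.add (continuousOn_const.mul hg)) ⟨right_neg, left_pos⟩

theorem pn_has_root_in_Ioo_three_general (ε : ℝ) (hε : 0 < ε) :
    ∀ᶠ x : ℝ in atTop, ∃ t ∈ Ioo (3 - ε) (3 : ℝ),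
      t ^ 4 - (x + 4) * t ^ 3 + (4 * x + 3) * t ^ 2 - (3 * x + 2) * t + 1 = 0 := by
  obtain ⟨a, ha, ha3⟩ : ∃ a, max (3 - ε) 1 < a ∧ a < 3 :=
    exists_between (max_lt (by linarith) (by norm_num))
  obtain ⟨hεa, ha1⟩ := max_lt_iff.mp ha
  have slope_pos : 0 < a * (a - 1) * (3 - a) :=
    mul_pos (mul_pos (by linarith) (by linarith)) (by linarith)
  have root_near_three : ∀ᶠ x : ℝ in atTop, ∃ t ∈ Ioo a 3,
      (t ^ 4 - 4 * t ^ 3 + 3 * t ^ 2 - 2 * t + 1) + x * (t * (t - 1) * (3 - t)) = 0 :=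
    eventually_exists_mem_Ioo_add_mul_eq_zero ha3.le (by fun_prop) (by fun_prop) slope_pos
      (by norm_num) (by norm_num)
  filter_upwards [root_near_three] with x ⟨t, ⟨hat, ht3⟩, root⟩
  exact ⟨t, ⟨hεa.trans hat, ht3⟩, by linear_combination root⟩

/-- For every `0 < ε < 1`, for all large `n` the polynomial
`p_n(t) = t⁴ − (n+4)t³ + (4n+3)t² − (3n+2)t + 1` has a real root in `(3−ε, 3)`. -/
theorem pn_has_root_in_Ioo_three (ε : ℝ) (hε0 : 0 < ε) (hε1 : ε < 1) :
    ∃ N : ℕ, ∀ n : ℕ, N ≤ n →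
      ∃ t ∈ Set.Ioo (3 - ε) (3 : ℝ),
        t ^ 4 - ((n : ℝ) + 4) * t ^ 3 + (4 * (n : ℝ) + 3) * t ^ 2
          - (3 * (n : ℝ) + 2) * t + 1 = 0 :=
  eventually_atTop.mp (pn_has_root_in_Ioo_three_general ε hε0).natCast_atTop
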